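/- Assume the regime switching model with |A| < ∞, the underlying process an aperiodic irreducible Markov chain on A with stationary distribution π and initial distribution η, and P ∈ RV_α(C, ℓ) with α ∈ (0,1), where ℓ is locally bounded away from 0 and ∞ on [1,∞). Then for all r ≥ 0: lim_{n→∞} P_η{𝓛_n = r} / ( n^{−(1−α)} ℓ(n) ) = Σ_{a∈A} π_a^α C(a) · αΓ(r+1−α)/r!. -/

import Mathlib

open MeasureTheory ENNReal Finset Filter

/-- `t`-step transition matrix of a kernel `Q` on a finite set. -/
noncomputable def mpow {A : Type*} [Fintype A] [DecidableEq A] (Q : A → A → ℝ) :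
    ℕ → A → A → ℝ
  | 0 => fun x y => if x = y then 1 else 0
  | (t + 1) => fun x y => ∑ z, Q x z * mpow Q t z y

/-- `ℓ` is slowly varying at `+∞`: `ℓ(cx)/ℓ(x) → 1` for every `c > 0`. -/
def SlowlyVarying (ℓ : ℝ → ℝ) : Prop :=
  ∀ c : ℝ, 0 < c → Tendsto (fun x => ℓ (c * x) / ℓ x) atTop (nhds 1)

open scoped Classical in
/-- The (real-valued) counting function `ν(a,ε) = Σ_k 1{p_{a,k} ≥ ε}`. -/
noncomputable def nuR {A : Type*} (p : A → ℕ → ℝ) (a : A) (ε : ℝ) : ℝ :=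
  ∑' k, if ε ≤ p a k then (1 : ℝ) else 0

lemma nuR_summable {A : Type*} {p : A → ℕ → ℝ} {a : A} (hp : Summable (p a))
    (hpnn : ∀ k, 0 ≤ p a k) {ε : ℝ} (hε : 0 < ε) :
    Summable (fun k => (open Classical in if ε ≤ p a k then (1 : ℝ) else 0)) := by
  refine Summable.of_nonneg_of_le (fun k => ?_) (fun k => ?_) (hp.mul_left ε⁻¹)
  · split_ifs <;> norm_num
  · split_ifs with h
    · rw [← inv_mul_cancel₀ hε.ne']
      gcongr
    · have := hpnn k
      positivity

lemma nuR_nonneg {A : Type*} (p : A → ℕ → ℝ) (a : A) (ε : ℝ) : 0 ≤ nuR p a ε := by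
  unfold nuR
  refine tsum_nonneg fun k => ?_
  split_ifs <;> norm_num

lemma nuR_anti {A : Type*} {p : A → ℕ → ℝ} {a : A} (hp : Summable (p a))
    (hpnn : ∀ k, 0 ≤ p a k) {x y : ℝ} (hx : 0 < x) (hxy : x ≤ y) : nuR p a y ≤ nuR p a x := by
  unfold nuR
  refine Summable.tsum_le_tsum (fun k => ?_) (nuR_summable hp hpnn (hx.trans_le hxy))
    (nuR_summable hp hpnn hx)
  split_ifs with h1 h2
  · exact le_rfl
  · exact absurd (hxy.trans h1) h2
  · norm_num
  · exact le_rfl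

lemma nuR_eq_zero {A : Type*} {p : A → ℕ → ℝ} {a : A} (hp1 : ∀ k, p a k ≤ 1)
    {x : ℝ} (hx : 1 < x) : nuR p a x = 0 := by
  unfold nuR
  have h : ∀ k, ¬ x ≤ p a k := fun k => not_le.2 ((hp1 k).trans_lt hx)
  simp only [h, if_false, tsum_zero]

lemma sum_by_parts {A : Type*} {p : A → ℕ → ℝ} {a : A} (hp : Summable (p a))
    (hpnn : ∀ k, 0 ≤ p a k) (hp1 : ∀ k, p a k ≤ 1) (G G' : ℝ → ℝ)
    (hG : ∀ x, HasDerivAt G (G' x) x) (hG' : Continuous G') (h0 : G 0 = 0) {n : ℝ} (hn : 0 < n) :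
    ∑' k, G (n * p a k) = ∫ u in Set.Ioi (0 : ℝ), G' u * nuR p a (u / n) := by
  classical
  obtain ⟨M, hM⟩ := (isCompact_Icc (a := (0 : ℝ)) (b := n)).exists_bound_of_continuousOn
    hG'.continuousOn
  have hle : ∀ k, n * p a k ≤ n := fun k => by nlinarith [hp1 k]
  have hnn : ∀ k, 0 ≤ n * p a k := fun k => mul_nonneg hn.le (hpnn k)
  set F : ℕ → ℝ → ℝ := fun k => (Set.Iic (n * p a k)).indicator G' with hF
  have hFI : ∀ k, ∫ u in Set.Ioi (0 : ℝ), F k u = G (n * p a k) := by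
    intro k
    rw [hF, setIntegral_indicator measurableSet_Iic, Set.Ioi_inter_Iic,
      ← intervalIntegral.integral_of_le (hnn k),
      intervalIntegral.integral_eq_sub_of_hasDerivAt (fun x _ => hG x)
        (hG'.intervalIntegrable _ _), h0, sub_zero]
  have hFint : ∀ k, Integrable (F k) (volume.restrict (Set.Ioi (0 : ℝ))) := by
    intro k
    rw [hF, integrable_indicator_iff measurableSet_Iic, IntegrableOn,
      Measure.restrict_restrict measurableSet_Iic, Set.inter_comm, Set.Ioi_inter_Iic]
    exact (hG'.integrableOn_Icc).mono_set Set.Ioc_subset_Icc_self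
  have hFn : ∀ k, ∫ u in Set.Ioi (0 : ℝ), ‖F k u‖ ≤ M * n * p a k := by
    intro k
    have : (fun u => ‖F k u‖) = (Set.Iic (n * p a k)).indicator (fun u => ‖G' u‖) := by
      ext u
      simp only [hF]
      exact norm_indicator_eq_indicator_norm _ _
    rw [this, setIntegral_indicator measurableSet_Iic, Set.Ioi_inter_Iic,
      ← intervalIntegral.integral_of_le (hnn k)]
    have := intervalIntegral.norm_integral_le_of_norm_le_const (a := 0) (b := n * p a k)
      (f := fun u => ‖G' u‖) (C := M) (fun x hx => by
        rw [Set.uIoc_of_le (hnn k)] at hx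
        rw [norm_norm]
        exact hM x ⟨hx.1.le, hx.2.trans (hle k)⟩)
    rw [sub_zero, abs_of_nonneg (hnn k)] at this
    calc _ ≤ _ := le_abs_self _
      _ ≤ M * (n * p a k) := this
      _ = _ := by ring
  have hsum : Summable fun k => ∫ u in Set.Ioi (0 : ℝ), ‖F k u‖ :=
    Summable.of_nonneg_of_le (fun k => integral_nonneg fun _ => norm_nonneg _) hFn
      (hp.mul_left _)
  have key := integral_tsum_of_summable_integral_norm hFint hsum
  simp only [hFI] at key
  rw [key]
  refine setIntegral_congr_fun measurableSet_Ioi fun u hu => ?_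
  simp only [nuR]
  rw [← tsum_mul_left]
  refine tsum_congr fun k => ?_
  simp only [hF, Set.indicator, Set.mem_Iic, div_le_iff₀ hn, mul_comm n]
  split_ifs <;> simp

lemma W_doubling {α : ℝ} {ℓ : ℝ → ℝ} (hsv : SlowlyVarying ℓ)
    (hpos : ∀ x, 1 ≤ x → 0 < ℓ x) {β : ℝ} (hβ : α < β) :
    ∀ᶠ x in atTop, ∀ j : ℕ, ((2:ℝ) ^ j * x) ^ α * ℓ (2 ^ j * x) ≤
      ((2:ℝ) ^ j) ^ β * (x ^ α * ℓ x) := by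
  have h1 : ∀ᶠ x in atTop, ℓ (2 * x) / ℓ x < 2 ^ (β - α) := by
    refine (hsv 2 two_pos).eventually (gt_mem_nhds ?_)
    exact Real.one_lt_rpow (by norm_num) (by linarith)
  obtain ⟨X, hX⟩ := eventually_atTop.1 h1
  filter_upwards [eventually_ge_atTop (max X 1)] with x hx j
  have hx1 : 1 ≤ x := (le_max_right _ _).trans hx
  have hxX : X ≤ x := (le_max_left _ _).trans hx
  induction j with
  | zero => simp
  | succ j ih =>
    have h2 : (1:ℝ) ≤ 2 ^ j := one_le_pow₀ (by norm_num)
    set y := (2:ℝ) ^ j * x with hy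
    have hyx : x ≤ y := by nlinarith
    have e : (2:ℝ) ^ (j+1) * x = 2 * y := by rw [hy]; ring
    rw [e]
    have h3 := hX y (hxX.trans hyx)
    have hly := hpos y (hx1.trans hyx)
    rw [div_lt_iff₀ hly] at h3
    have hy0 : 0 < y := by linarith
    calc (2 * y) ^ α * ℓ (2 * y) ≤ (2 * y) ^ α * (2 ^ (β - α) * ℓ y) := by gcongr
      _ = 2 ^ β * (y ^ α * ℓ y) := by
        rw [Real.mul_rpow (by norm_num) hy0.le, Real.rpow_sub (by norm_num)]
        have : (0:ℝ) < 2 ^ α := by positivity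
        field_simp
      _ ≤ 2 ^ β * (((2:ℝ) ^ j) ^ β * (x ^ α * ℓ x)) := by gcongr
      _ = _ := by
        rw [pow_succ, Real.mul_rpow (by positivity) (by norm_num)]; ring

lemma nu_tendsto_inv {A : Type*} {p : A → ℕ → ℝ} {a : A} {α : ℝ} {ℓ : ℝ → ℝ} {c : ℝ}
    (hRV : Tendsto (fun ε : ℝ => nuR p a ε / (ε ^ (-α) * ℓ (1 / ε)))
      (nhdsWithin 0 (Set.Ioi 0)) (nhds c)) :
    Tendsto (fun x : ℝ => nuR p a (1 / x) / (x ^ α * ℓ x)) atTop (nhds c) := by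
  have h := hRV.comp tendsto_inv_atTop_nhdsGT_zero
  refine h.congr' ?_
  filter_upwards [eventually_gt_atTop 0] with x hx
  simp only [Function.comp, one_div, inv_inv]
  rw [Real.inv_rpow hx.le, Real.rpow_neg hx.le, inv_inv]

lemma nu_pointwise {A : Type*} {p : A → ℕ → ℝ} {a : A} {α : ℝ} {ℓ : ℝ → ℝ} {c : ℝ}
    (hsv : SlowlyVarying ℓ) (hpos : ∀ x, 1 ≤ x → 0 < ℓ x)
    (hRV : Tendsto (fun ε : ℝ => nuR p a ε / (ε ^ (-α) * ℓ (1 / ε)))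
      (nhdsWithin 0 (Set.Ioi 0)) (nhds c)) {u : ℝ} (hu : 0 < u) :
    Tendsto (fun x : ℝ => nuR p a (u / x) / (x ^ α * ℓ x)) atTop (nhds (c * u ^ (-α))) := by
  have h1 : Tendsto (fun x : ℝ => u⁻¹ * x) atTop atTop :=
    tendsto_id.const_mul_atTop (inv_pos.2 hu)
  have h2 := ((nu_tendsto_inv hRV).comp h1).mul
    ((hsv u⁻¹ (inv_pos.2 hu)).mul_const (u ^ (-α)))
  rw [one_mul] at h2
  refine h2.congr' ?_
  filter_upwards [eventually_gt_atTop 0, eventually_ge_atTop 1, h1.eventually_ge_atTop 1]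
    with x hx hx1 hx2
  have e1 := hpos x hx1
  have e2 := hpos _ hx2
  simp only [Function.comp]
  have e3 : 1 / (u⁻¹ * x) = u / x := by field_simp
  rw [e3, Real.mul_rpow (inv_pos.2 hu).le hx.le, Real.inv_rpow hu.le, ← Real.rpow_neg hu.le]
  have e4 : 0 < u ^ (-α) := by positivity
  have e5 : 0 < x ^ α := by positivity
  generalize ℓ (u⁻¹ * x) = L at *
  field_simp

lemma nu_bound {A : Type*} {p : A → ℕ → ℝ} {a : A} (hp : Summable (p a))
    (hpnn : ∀ k, 0 ≤ p a k) {α β : ℝ} (hα : 0 < α) (hβ : α < β) {ℓ : ℝ → ℝ} {c : ℝ}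
    (hsv : SlowlyVarying ℓ) (hpos : ∀ x, 1 ≤ x → 0 < ℓ x)
    (hRV : Tendsto (fun ε : ℝ => nuR p a ε / (ε ^ (-α) * ℓ (1 / ε)))
      (nhdsWithin 0 (Set.Ioi 0)) (nhds c)) :
    ∃ K : ℝ, 0 < K ∧ ∀ᶠ x : ℝ in atTop, ∀ u, 0 < u →
      nuR p a (u / x) / (x ^ α * ℓ x) ≤ K * (u ^ (-β) + 1) := by
  have hK : ∀ᶠ x in atTop, nuR p a (1 / x) / (x ^ α * ℓ x) < |c| + 1 :=
    (nu_tendsto_inv hRV).eventually (gt_mem_nhds (by linarith [le_abs_self c]))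
  obtain ⟨X, hX⟩ := eventually_atTop.1 hK
  have hK0 : 0 < |c| + 1 := by positivity
  refine ⟨(|c| + 1) * 2 ^ β, by positivity, ?_⟩
  filter_upwards [eventually_ge_atTop (max X 1), W_doubling hsv hpos hβ] with x hx hd u hu
  have hx1 : 1 ≤ x := (le_max_right _ _).trans hx
  have hxX : X ≤ x := (le_max_left _ _).trans hx
  have hx0 : 0 < x := by linarith
  have hl := hpos x hx1
  have hW : 0 < x ^ α * ℓ x := by positivity
  have hbb : ∀ y, x ≤ y → nuR p a (1 / y) ≤ (|c| + 1) * (y ^ α * ℓ y) := by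
    intro y hy
    have hy0 : 0 < y := by linarith
    have := hpos y (hx1.trans hy)
    have h := hX y (hxX.trans hy)
    rw [div_lt_iff₀ (by positivity)] at h
    exact h.le
  have h2b : (1:ℝ) ≤ 2 ^ β := Real.one_le_rpow (by norm_num) (by linarith)
  rw [div_le_iff₀ hW]
  rcases le_total 1 u with h1u | h1u
  · have h3 : nuR p a (u / x) ≤ nuR p a (1 / x) := nuR_anti hp hpnn (by positivity) (by gcongr)
    refine (h3.trans (hbb x le_rfl)).trans ?_
    gcongr
    have : 0 < u ^ (-β) := by positivity
    have : (1:ℝ) ≤ 2 ^ β * (u ^ (-β) + 1) := by nlinarith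
    calc |c| + 1 = (|c| + 1) * 1 := by ring
      _ ≤ (|c| + 1) * (2 ^ β * (u ^ (-β) + 1)) := by gcongr
      _ = _ := by ring
  · obtain ⟨j, hj1, hj2⟩ := exists_nat_pow_near (x := 1 / u) (y := (2:ℝ))
      (by rw [le_div_iff₀ hu]; linarith) (by norm_num)
    have hpj : (0:ℝ) < 2 ^ (j+1) := by positivity
    have h3 : nuR p a (u / x) ≤ nuR p a (1 / (2 ^ (j+1) * x)) := by
      refine nuR_anti hp hpnn (by positivity) ?_
      rw [div_lt_iff₀ hu] at hj2
      rw [div_le_div_iff₀ (by positivity) hx0]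
      nlinarith
    have h2j : (1:ℝ) ≤ 2 ^ (j+1) := one_le_pow₀ (by norm_num)
    have h4 := (h3.trans (hbb _ (by nlinarith))).trans (mul_le_mul_of_nonneg_left (hd (j+1)) hK0.le)
    refine h4.trans ?_
    rw [← mul_assoc]
    refine mul_le_mul_of_nonneg_right ?_ hW.le
    rw [mul_assoc]
    refine mul_le_mul_of_nonneg_left ?_ hK0.le
    rw [pow_succ, Real.mul_rpow (by positivity) (by norm_num), mul_comm]
    gcongr
    have : ((2:ℝ)^j) ^ β ≤ (1/u) ^ β := Real.rpow_le_rpow (by positivity) hj1 (by linarith)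
    rw [one_div, Real.inv_rpow hu.le, ← Real.rpow_neg hu.le] at this
    linarith

/-- The iid quantity. -/
noncomputable def ffun (q : ℕ → ℝ) (r m : ℕ) : ℝ :=
  (m.choose r : ℝ) * ∑' k, q k ^ (r + 1) * (1 - q k) ^ (m - r)

/-- The filter of pairs `(n, m)` with `n → ∞` and `m / n → c`. -/
noncomputable def ratioFilter (c : ℝ) : Filter (ℕ × ℕ) :=
  comap Prod.fst atTop ⊓ comap (fun z : ℕ × ℕ => (z.2 : ℝ) / (z.1 : ℝ)) (nhds c)

instance (c : ℝ) : (ratioFilter c).IsCountablyGenerated := by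
  unfold ratioFilter; infer_instance

lemma ratio_fst (c : ℝ) : Tendsto (fun z : ℕ × ℕ => (z.1 : ℝ)) (ratioFilter c) atTop :=
  tendsto_natCast_atTop_atTop.comp (tendsto_comap.mono_left inf_le_left)

lemma ratio_div (c : ℝ) :
    Tendsto (fun z : ℕ × ℕ => (z.2 : ℝ) / (z.1 : ℝ)) (ratioFilter c) (nhds c) :=
  tendsto_comap.mono_left inf_le_right

lemma ratio_snd {c : ℝ} (hc : 0 < c) :
    Tendsto (fun z : ℕ × ℕ => (z.2 : ℝ)) (ratioFilter c) atTop := by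
  refine ((ratio_div c).pos_mul_atTop hc (ratio_fst c)).congr' ?_
  filter_upwards [(ratio_fst c).eventually_gt_atTop 0] with z hz
  field_simp

lemma ratio_sub {c : ℝ} (hc : 0 < c) (r : ℕ) :
    Tendsto (fun z : ℕ × ℕ => ((z.2 - r : ℕ) : ℝ) / (z.1 : ℝ)) (ratioFilter c) (nhds c) := by
  have h := (ratio_div c).sub ((ratio_fst c).const_div_atTop (r : ℝ))
  rw [sub_zero] at h
  refine h.congr' ?_
  filter_upwards [(ratio_snd hc).eventually_ge_atTop (r : ℝ)] with z hz
  rw [Nat.cast_sub (by exact_mod_cast hz), sub_div]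

lemma ratio_choose {c : ℝ} (hc : 0 < c) (r : ℕ) :
    Tendsto (fun z : ℕ × ℕ => (z.2.choose r : ℝ) / (z.1 : ℝ) ^ r) (ratioFilter c)
      (nhds (c ^ r / r.factorial)) := by
  induction r with
  | zero => simpa using tendsto_const_nhds
  | succ r ih =>
    have h := (ih.mul (ratio_sub hc r)).div_const ((r : ℝ) + 1)
    have e : c ^ r / (r.factorial : ℝ) * c / (r + 1) = c ^ (r+1) / ((r+1).factorial : ℝ) := by
      rw [Nat.factorial_succ]; push_cast; field_simp; ring
    rw [e] at h
    refine h.congr fun z => ?_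
    have h2 : ((z.2.choose (r+1) : ℕ) : ℝ) * ((r:ℝ) + 1) = z.2.choose r * ((z.2 - r : ℕ) : ℝ) := by
      exact_mod_cast Nat.choose_succ_right_eq z.2 r
    have h3 : (z.2.choose (r+1) : ℝ) = z.2.choose r * ((z.2 - r : ℕ) : ℝ) / ((r:ℝ) + 1) := by
      rw [← h2]; field_simp
    rw [h3, pow_succ]
    simp only [div_eq_mul_inv, mul_inv]
    ring

lemma ratio_pow {c : ℝ} (hc : 0 < c) (r : ℕ) (u : ℝ) :
    Tendsto (fun z : ℕ × ℕ => (1 - u / (z.1 : ℝ)) ^ (z.2 - r)) (ratioFilter c)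
      (nhds (Real.exp (-(c * u)))) := by
  have h1 : Tendsto (fun z : ℕ × ℕ => (z.1 : ℝ) * Real.log (1 + (-u) / z.1)) (ratioFilter c)
      (nhds (-u)) :=
    (Real.tendsto_mul_log_one_add_div_atTop (-u)).comp (ratio_fst c)
  have h2 := ((ratio_sub hc r).mul h1).rexp
  rw [mul_neg] at h2
  refine h2.congr' ?_
  filter_upwards [(ratio_fst c).eventually_gt_atTop 0, (ratio_fst c).eventually_gt_atTop u]
    with z hz hz2
  have h3 : 0 < 1 - u / (z.1 : ℝ) := by
    rw [sub_pos, div_lt_one hz]; exact hz2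
  have e : (1:ℝ) + (-u) / z.1 = 1 - u / z.1 := by ring
  rw [e, ← Real.exp_log (pow_pos h3 _), Real.log_pow]
  congr 1
  field_simp

lemma ratio_pow_bound {c : ℝ} (hc : 0 < c) (r : ℕ) :
    ∀ᶠ z in ratioFilter c, ∀ u : ℝ, 0 < u → u ≤ (z.1 : ℝ) →
      |(1 - u / (z.1 : ℝ)) ^ (z.2 - r)| ≤ Real.exp (-(c / 2 * u)) := by
  filter_upwards [(ratio_fst c).eventually_gt_atTop 0,
    (ratio_sub hc r).eventually (lt_mem_nhds (half_lt_self hc))] with z hz hz2 u hu hun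
  have h3 : 0 ≤ 1 - u / (z.1 : ℝ) := by
    rw [sub_nonneg, div_le_one hz]; exact hun
  rw [abs_of_nonneg (pow_nonneg h3 _)]
  have h4 : 1 - u / (z.1 : ℝ) ≤ Real.exp (-(u / z.1)) := by
    have := Real.add_one_le_exp (-(u / (z.1:ℝ))); linarith
  calc _ ≤ (Real.exp (-(u / z.1))) ^ (z.2 - r) := pow_le_pow_left₀ h3 h4 _
    _ = Real.exp (-(((z.2 - r : ℕ) : ℝ) / z.1 * u)) := by
      rw [← Real.exp_nat_mul]; congr 1; ring
    _ ≤ _ := by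
      apply Real.exp_le_exp.2
      nlinarith

lemma integrable_aux {s b : ℝ} (hs : -1 < s) (hb : 0 < b) :
    Integrable (fun u : ℝ => u ^ s * Real.exp (-(b * u))) (volume.restrict (Set.Ioi 0)) := by
  have := integrableOn_rpow_mul_exp_neg_mul_rpow (p := 1) hs one_pos hb
  simpa [IntegrableOn, neg_mul] using this

theorem iid_asymp {A : Type*} {p : A → ℕ → ℝ} {a : A} (hp : Summable (p a))
    (hpnn : ∀ k, 0 ≤ p a k) (hp1 : ∀ k, p a k ≤ 1) {α : ℝ} (hα : 0 < α) (hα1 : α < 1)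
    {ℓ : ℝ → ℝ} {D : ℝ}
    (hsv : SlowlyVarying ℓ) (hpos : ∀ x, 1 ≤ x → 0 < ℓ x)
    (hRV : Tendsto (fun ε : ℝ => nuR p a ε / (ε ^ (-α) * ℓ (1 / ε)))
      (nhdsWithin 0 (Set.Ioi 0)) (nhds D)) (r : ℕ) {c : ℝ} (hc : 0 < c) :
    Tendsto (fun z : ℕ × ℕ => ffun (p a) r z.2 / ((z.1 : ℝ) ^ (-(1 - α)) * ℓ z.1))
      (ratioFilter c)
      (nhds (c ^ (α - 1) * (D * (α * Real.Gamma (r + 1 - α) / (r.factorial : ℝ))))) := by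
  set β := (1 + α) / 2 with hβ
  have hβα : α < β := by rw [hβ]; linarith
  have hβ1 : β < 1 := by rw [hβ]; linarith
  obtain ⟨K, hK0, hK⟩ := nu_bound hp hpnn hα hβα hsv hpos hRV
  set G' : ℕ × ℕ → ℝ → ℝ := fun z u =>
    ((r : ℝ) + 1) * u ^ r * (1 - u / z.1) ^ (z.2 - r) -
      ((z.2 - r : ℕ) : ℝ) / z.1 * u ^ (r + 1) * (1 - u / z.1) ^ (z.2 - (r + 1)) with hG'
  set H : ℕ × ℕ → ℝ → ℝ := fun z u => G' z u * (nuR p a (u / z.1) / ((z.1 : ℝ) ^ α * ℓ z.1))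
    with hH
  set Hlim : ℝ → ℝ := fun u => (((r : ℝ) + 1) * u ^ r * Real.exp (-(c * u)) -
      c * u ^ (r + 1) * Real.exp (-(c * u))) * (D * u ^ (-α)) with hHlim
  have key : Tendsto (fun z => ∫ u in Set.Ioi (0:ℝ), H z u) (ratioFilter c)
      (nhds (∫ u in Set.Ioi (0:ℝ), Hlim u)) := by
    set bd : ℝ → ℝ := fun u => (((r : ℝ) + 1) * u ^ r * Real.exp (-(c / 2 * u)) +
      (c + 1) * u ^ (r + 1) * Real.exp (-(c / 2 * u))) * (K * (u ^ (-β) + 1)) with hbd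
    refine tendsto_integral_filter_of_dominated_convergence bd ?_ ?_ ?_ ?_
    · filter_upwards [(ratio_fst c).eventually_gt_atTop 0] with z hz
      refine AEStronglyMeasurable.mul ?_ ?_
      · refine Continuous.aestronglyMeasurable ?_
        simp only [hG']
        fun_prop
      · refine AEMeasurable.aestronglyMeasurable ?_
        refine AEMeasurable.div_const ?_ _
        refine aemeasurable_restrict_of_antitoneOn measurableSet_Ioi ?_
        intro x hx y hy hxy
        exact nuR_anti hp hpnn (div_pos hx hz) (by gcongr)
    · filter_upwards [(ratio_fst c).eventually_gt_atTop 0, (ratio_fst c).eventually_ge_atTop 1,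
        ratio_pow_bound hc r,
        ratio_pow_bound hc (r+1), (ratio_fst c).eventually hK,
        (ratio_sub hc r).eventually (gt_mem_nhds (lt_add_one c))] with z hz hz1 hb1 hb2 hk hz3
      filter_upwards [ae_restrict_mem measurableSet_Ioi] with u hu
      have hu : 0 < u := hu
      have hW : 0 < (z.1 : ℝ) ^ α * ℓ z.1 := by
        have := hpos _ hz1
        positivity
      have hbd0 : 0 ≤ bd u := by simp only [hbd]; positivity
      rcases le_or_gt u z.1 with hun | hun
      · simp only [hH, hbd]
        rw [norm_mul]
        have hn0 : 0 ≤ nuR p a (u / z.1) / ((z.1 : ℝ) ^ α * ℓ z.1) :=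
          div_nonneg (nuR_nonneg _ _ _) hW.le
        rw [Real.norm_of_nonneg hn0]
        refine mul_le_mul ?_ (hk u hu) hn0 (by positivity)
        simp only [hG']
        refine (norm_sub_le _ _).trans ?_
        rw [norm_mul, norm_mul (_ * _)]
        refine add_le_add ?_ ?_
        · rw [Real.norm_of_nonneg (by positivity)]
          exact mul_le_mul_of_nonneg_left (hb1 u hu hun) (by positivity)
        · rw [Real.norm_of_nonneg (by positivity)]
          refine mul_le_mul ?_ (hb2 u hu hun) (norm_nonneg _) (by positivity)
          gcongr
      · simp only [hH]
        rw [nuR_eq_zero hp1 (by rw [lt_div_iff₀ hz]; linarith)]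
        simpa using hbd0
    · have hc2 : 0 < c / 2 := by positivity
      have hr : (0:ℝ) ≤ r := by positivity
      have i1 := (integrable_aux (s := r - β) (by linarith) hc2).const_mul (K * (r + 1))
      have i2 := (integrable_aux (s := r) (by linarith) hc2).const_mul (K * (r + 1))
      have i3 := (integrable_aux (s := r + 1 - β) (by linarith) hc2).const_mul (K * (c + 1))
      have i4 := (integrable_aux (s := r + 1) (by linarith) hc2).const_mul (K * (c + 1))
      refine (((i1.add i2).add i3).add i4).congr ?_
      filter_upwards [ae_restrict_mem measurableSet_Ioi] with u hu
      have hu : 0 < u := hu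
      simp only [hbd, Pi.add_apply]
      have e1 : u ^ ((r:ℝ) - β) = u ^ r * u ^ (-β) := by
        rw [sub_eq_add_neg, Real.rpow_add hu, Real.rpow_natCast]
      have e2 : u ^ ((r:ℝ) + 1 - β) = u ^ (r+1) * u ^ (-β) := by
        rw [sub_eq_add_neg, Real.rpow_add hu, ← Real.rpow_natCast]; push_cast; rfl
      have e3 : u ^ ((r:ℝ) + 1) = u ^ (r+1) := by
        rw [← Real.rpow_natCast]; push_cast; rfl
      rw [e1, e2, e3, Real.rpow_natCast]
      ring
    · filter_upwards [ae_restrict_mem measurableSet_Ioi] with u hu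
      have hu : 0 < u := hu
      simp only [hH, hHlim, hG']
      refine Tendsto.mul (Tendsto.sub ?_ ?_) ?_
      · exact (ratio_pow hc r u).const_mul _
      · exact ((ratio_sub hc r).mul_const _).mul (ratio_pow hc (r+1) u)
      · exact (nu_pointwise hsv hpos hRV hu).comp (ratio_fst c)
  have hval : ∫ u in Set.Ioi (0:ℝ), Hlim u =
      D * (α * Real.Gamma (r + 1 - α)) * c ^ (-(r + 1 - α)) := by
    have hr : (0:ℝ) ≤ r := by positivity
    have i1 := (integrable_aux (s := r - α) (by linarith) hc).const_mul (D * (r + 1))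
    have i3 := (integrable_aux (s := r + 1 - α) (by linarith) hc).const_mul (D * c)
    have : ∫ u in Set.Ioi (0:ℝ), Hlim u = ∫ u in Set.Ioi (0:ℝ),
        (D * (r + 1) * (u ^ (r - α) * Real.exp (-(c * u))) -
          D * c * (u ^ (r + 1 - α) * Real.exp (-(c * u)))) := by
      refine setIntegral_congr_fun measurableSet_Ioi fun u hu => ?_
      have hu : 0 < u := hu
      have e1 : u ^ ((r:ℝ) - α) = u ^ r * u ^ (-α) := by
        rw [sub_eq_add_neg, Real.rpow_add hu, Real.rpow_natCast]
      have e2 : u ^ ((r:ℝ) + 1 - α) = u ^ (r+1) * u ^ (-α) := by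
        rw [sub_eq_add_neg, Real.rpow_add hu, ← Real.rpow_natCast]; push_cast; rfl
      simp only [hHlim]
      rw [e1, e2]
      ring
    rw [this, integral_sub i1 i3, integral_const_mul, integral_const_mul]
    have g1 := Real.integral_rpow_mul_exp_neg_mul_Ioi (a := r + 1 - α) (r := c) (by linarith) hc
    have g2 := Real.integral_rpow_mul_exp_neg_mul_Ioi (a := r + 1 - α + 1) (r := c)
      (by linarith) hc
    rw [show (r:ℝ) + 1 - α - 1 = r - α by ring] at g1
    rw [add_sub_cancel_right] at g2
    rw [g1, g2, Real.Gamma_add_one (by linarith), Real.rpow_add_one (by positivity), one_div,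
      Real.inv_rpow hc.le, Real.rpow_neg hc.le]
    field_simp
    ring
  have hfin := (ratio_choose hc r).mul key
  rw [hval] at hfin
  have elim : c ^ r / (r.factorial : ℝ) *
      (D * (α * Real.Gamma (r + 1 - α)) * c ^ (-((r:ℝ) + 1 - α))) =
      c ^ (α - 1) * (D * (α * Real.Gamma (r + 1 - α) / (r.factorial : ℝ))) := by
    have : c ^ (α - 1) = c ^ r * c ^ (-((r:ℝ) + 1 - α)) := by
      rw [← Real.rpow_natCast c r, ← Real.rpow_add hc]; congr 1; ring
    rw [this]; ring
  rw [elim] at hfin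
  refine hfin.congr' ?_
  filter_upwards [(ratio_fst c).eventually_gt_atTop 0, (ratio_fst c).eventually_ge_atTop 1]
    with z hz hz1
  have hl := hpos _ hz1
  have hsbp := sum_by_parts hp hpnn hp1
    (fun u => u ^ (r+1) * (1 - u / z.1) ^ (z.2 - r)) (G' z) (by
      intro x
      have d1 : HasDerivAt (fun u : ℝ => 1 - u / (z.1:ℝ)) (-(1 / z.1)) x := by
        simpa using ((hasDerivAt_id x).div_const (z.1:ℝ)).const_sub 1
      have d2 := (hasDerivAt_pow (r+1) x).mul (d1.pow (z.2 - r))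
      refine HasDerivAt.congr_deriv (f := fun u : ℝ => u ^ (r+1) * (1 - u / z.1) ^ (z.2 - r)) d2 ?_
      simp only [hG', ← Nat.sub_sub, Pi.pow_apply, Nat.add_sub_cancel]
      push_cast
      ring) (by simp only [hG']; fun_prop) (by simp) hz
  have h1 : ∫ u in Set.Ioi (0:ℝ), H z u =
      (∫ u in Set.Ioi (0:ℝ), G' z u * nuR p a (u / z.1)) / ((z.1 : ℝ) ^ α * ℓ z.1) := by
    rw [← integral_div]
    simp only [hH, mul_div_assoc]
  rw [h1, ← hsbp, ffun]
  have h2 : ∑' k, ((z.1:ℝ) * p a k) ^ (r+1) * (1 - z.1 * p a k / z.1) ^ (z.2 - r) =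
      (z.1:ℝ) ^ (r+1) * ∑' k, p a k ^ (r + 1) * (1 - p a k) ^ (z.2 - r) := by
    rw [← tsum_mul_left]
    refine tsum_congr fun k => ?_
    rw [mul_div_cancel_left₀ _ hz.ne', mul_pow]; ring
  rw [h2]
  have h3 : (z.1:ℝ) ^ (-(1 - α)) = (z.1:ℝ) ^ α / z.1 := by
    rw [neg_sub, Real.rpow_sub hz, Real.rpow_one]
  rw [h3]
  have : 0 < (z.1:ℝ) ^ α := by positivity
  field_simp
  ring

section Chain

set_option linter.unusedSectionVars false

variable {A : Type*} [Fintype A] [DecidableEq A]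

/-- The transition operator on functions. -/
noncomputable def tOp (Q : A → A → ℝ) (f : A → ℝ) : A → ℝ := fun x => ∑ y, Q x y * f y

lemma tOp_iter (Q : A → A → ℝ) (f : A → ℝ) (t : ℕ) (x : A) :
    (tOp Q)^[t] f x = ∑ y, mpow Q t x y * f y := by
  induction t generalizing x with
  | zero => simp [mpow]
  | succ t ih =>
    rw [Function.iterate_succ_apply', tOp]
    simp only [ih, mpow, Finset.mul_sum, Finset.sum_mul]
    rw [Finset.sum_comm]
    simp only [mul_assoc]

lemma mpow_sum {Q : A → A → ℝ} (hQ : ∀ x, ∑ y, Q x y = 1) (t : ℕ) (x : A) :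
    ∑ y, mpow Q t x y = 1 := by
  induction t generalizing x with
  | zero => simp [mpow]
  | succ t ih =>
    simp only [mpow]
    rw [Finset.sum_comm]
    simp only [← Finset.mul_sum, ih, mul_one, hQ]

lemma tOp_norm {Q : A → A → ℝ} (hQnn : ∀ x y, 0 ≤ Q x y) (hQ : ∀ x, ∑ y, Q x y = 1)
    (f : A → ℝ) : ‖tOp Q f‖ ≤ ‖f‖ := by
  rw [pi_norm_le_iff_of_nonneg (norm_nonneg _)]
  intro x
  calc ‖∑ y, Q x y * f y‖ ≤ ∑ y, ‖Q x y * f y‖ := norm_sum_le _ _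
    _ ≤ ∑ y, Q x y * ‖f‖ := by
      refine Finset.sum_le_sum fun y _ => ?_
      rw [norm_mul, Real.norm_of_nonneg (hQnn x y)]
      exact mul_le_mul_of_nonneg_left (norm_le_pi_norm f y) (hQnn x y)
    _ = ‖f‖ := by rw [← Finset.sum_mul, hQ, one_mul]

lemma tOp_pi {Q : A → A → ℝ} {π : A → ℝ} (hstat : ∀ x, ∑ y, π y * Q y x = π x) (f : A → ℝ) :
    ∑ x, π x * tOp Q f x = ∑ x, π x * f x := by
  simp only [tOp, Finset.mul_sum]
  rw [Finset.sum_comm]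
  simp only [← mul_assoc, ← Finset.sum_mul, hstat]

lemma tOp_summable [Nonempty A] {Q : A → A → ℝ} {π : A → ℝ}
    (hQnn : ∀ x y, 0 ≤ Q x y) (hQ : ∀ x, ∑ y, Q x y = 1)
    (hprim : ∃ t : ℕ, ∀ a b, 0 < mpow Q t a b)
    (hπpos : ∀ x, 0 < π x) (hπsum : ∑ x, π x = 1)
    (hstat : ∀ x, ∑ y, π y * Q y x = π x) (f : A → ℝ) (hf : ∑ x, π x * f x = 0) :
    Summable fun t => ‖(tOp Q)^[t] f‖ := by
  obtain ⟨t₀, ht₀⟩ := hprim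
  obtain ⟨z, hz⟩ := Finite.exists_min (fun z : A × A => mpow Q t₀ z.1 z.2)
  set ε := mpow Q t₀ z.1 z.2 with hε
  have hε0 : 0 < ε := ht₀ _ _
  have hπ1 : ∀ x, π x ≤ 1 := fun x => by
    rw [← hπsum]
    exact Finset.single_le_sum (fun i _ => (hπpos i).le) (Finset.mem_univ x)
  have hpi : ∀ t, ∑ x, π x * (tOp Q)^[t] f x = 0 := by
    intro t
    induction t with
    | zero => simpa using hf
    | succ t ih => rw [Function.iterate_succ_apply', tOp_pi hstat, ih]
  have hcontr : ∀ g : A → ℝ, ∑ x, π x * g x = 0 → ‖(tOp Q)^[t₀] g‖ ≤ (1 - ε) * ‖g‖ := by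
    intro g hg
    have hcoef : ∀ x y, 0 ≤ mpow Q t₀ x y - ε * π y := fun x y => by
      have := hz (x, y)
      have := hπ1 y
      simp only at *
      nlinarith
    have hsum : ∀ x, ∑ y, (mpow Q t₀ x y - ε * π y) = 1 - ε := fun x => by
      rw [Finset.sum_sub_distrib, mpow_sum hQ, ← Finset.mul_sum, hπsum, mul_one]
    have h1ε : 0 ≤ 1 - ε := by
      rw [← hsum (Classical.arbitrary A)]
      exact Finset.sum_nonneg fun y _ => hcoef _ y
    rw [pi_norm_le_iff_of_nonneg (mul_nonneg h1ε (norm_nonneg _))]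
    intro x
    have : (tOp Q)^[t₀] g x = ∑ y, (mpow Q t₀ x y - ε * π y) * g y := by
      simp only [sub_mul, Finset.sum_sub_distrib, mul_assoc, ← Finset.mul_sum, hg, mul_zero,
        sub_zero]
      exact tOp_iter Q g t₀ x
    rw [this]
    calc ‖∑ y, (mpow Q t₀ x y - ε * π y) * g y‖
        ≤ ∑ y, ‖(mpow Q t₀ x y - ε * π y) * g y‖ := norm_sum_le _ _
      _ ≤ ∑ y, (mpow Q t₀ x y - ε * π y) * ‖g‖ := by
        refine Finset.sum_le_sum fun y _ => ?_
        rw [norm_mul, Real.norm_of_nonneg (hcoef x y)]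
        exact mul_le_mul_of_nonneg_left (norm_le_pi_norm g y) (hcoef x y)
      _ = (1 - ε) * ‖g‖ := by rw [← Finset.sum_mul, hsum]
  have hmono : ∀ t, ‖(tOp Q)^[t] f‖ ≤ ‖f‖ := by
    intro t
    induction t with
    | zero => simp
    | succ t ih =>
      rw [Function.iterate_succ_apply']
      exact (tOp_norm hQnn hQ _).trans ih
  refine summable_of_sum_range_le (c := t₀ * ‖f‖ / ε) (fun _ => norm_nonneg _) fun N => ?_
  set S := fun N => ∑ t ∈ Finset.range N, ‖(tOp Q)^[t] f‖ with hS
  have h1 : S (t₀ + N) ≤ t₀ * ‖f‖ + (1 - ε) * S N := by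
    simp only [hS]
    rw [Finset.sum_range_add, Finset.mul_sum]
    refine add_le_add ?_ (Finset.sum_le_sum fun t _ => ?_)
    · calc _ ≤ ∑ t ∈ Finset.range t₀, ‖f‖ := Finset.sum_le_sum fun t _ => hmono t
        _ = _ := by simp
    · rw [Function.iterate_add_apply]
      exact hcontr _ (hpi t)
  have h2 : S N ≤ S (t₀ + N) :=
    Finset.sum_le_sum_of_subset_of_nonneg (Finset.range_subset_range.2 (by omega))
      fun _ _ _ => norm_nonneg _
  change S N ≤ _
  rw [le_div_iff₀ hε0]
  nlinarith

lemma poisson_eq [Nonempty A] {Q : A → A → ℝ} {f : A → ℝ}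
    (hs : Summable fun t => ‖(tOp Q)^[t] f‖) : ∃ h : A → ℝ, ∀ x, h x = f x + tOp Q h x := by
  have hsx : ∀ x, Summable fun t => (tOp Q)^[t] f x := fun x =>
    Summable.of_norm_bounded hs fun t => norm_le_pi_norm ((tOp Q)^[t] f) x
  refine ⟨fun x => ∑' t, (tOp Q)^[t] f x, fun x => ?_⟩
  change ∑' t, (tOp Q)^[t] f x = _
  rw [(hsx x).tsum_eq_zero_add]
  congr 1
  simp only [Function.iterate_succ_apply', tOp]
  rw [Summable.tsum_finsetSum fun y _ => (hsx y).mul_left (Q x y)]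
  simp only [tsum_mul_left]

/-- Path weights. -/
noncomputable def pw (Q : A → A → ℝ) (η : A → ℝ) (n : ℕ) (x : Fin (n + 1) → A) : ℝ :=
  η (x 0) * ∏ i : Fin n, Q (x i.castSucc) (x i.succ)

lemma pw_nonneg {Q : A → A → ℝ} {η : A → ℝ} (hQnn : ∀ x y, 0 ≤ Q x y) (hηnn : ∀ a, 0 ≤ η a)
    (n : ℕ) (x : Fin (n + 1) → A) : 0 ≤ pw Q η n x :=
  mul_nonneg (hηnn _) (Finset.prod_nonneg fun _ _ => hQnn _ _)

lemma pw_snoc (Q : A → A → ℝ) (η : A → ℝ) (n : ℕ) (x : Fin (n + 1) → A) (b : A) :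
    pw Q η (n + 1) (Fin.snoc x b : Fin (n + 2) → A) = pw Q η n x * Q (x (Fin.last n)) b := by
  unfold pw
  rw [Fin.prod_univ_castSucc]
  have h0 : (Fin.snoc x b : Fin (n + 2) → A) 0 = x 0 := by
    rw [← Fin.castSucc_zero]
    exact Fin.snoc_castSucc (α := fun _ => A) b x 0
  have h1 : ∀ i : Fin (n+1), (Fin.snoc x b : Fin (n + 2) → A) i.castSucc = x i := fun i =>
    Fin.snoc_castSucc (α := fun _ => A) b x i
  have h2 : (Fin.snoc x b : Fin (n + 2) → A) (Fin.last _) = b :=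
    Fin.snoc_last (α := fun _ => A) b x
  simp only [h0, h1, Fin.succ_last, h2, Fin.succ_castSucc, mul_assoc]

lemma sum_snoc (n : ℕ) (F : (Fin (n + 1) → A) → ℝ) :
    ∑ x, F x = ∑ x : Fin n → A, ∑ b, F (Fin.snoc x b : Fin (n + 1) → A) := by
  rw [← (Fin.snocEquiv (fun _ : Fin (n+1) => A)).sum_comp, Fintype.sum_prod_type, Finset.sum_comm]
  rfl

lemma pw_marginal (Q : A → A → ℝ) (η : A → ℝ) (n : ℕ) (g : A → ℝ) :
    ∑ x, pw Q η n x * g (x (Fin.last n)) = ∑ b, η b * (tOp Q)^[n] g b := by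
  induction n generalizing g with
  | zero =>
    rw [← (Equiv.funUnique (Fin 1) A).symm.sum_comp]
    simp [pw]
  | succ n ih =>
    rw [sum_snoc, Function.iterate_succ_apply, ← ih]
    refine Finset.sum_congr rfl fun x _ => ?_
    simp only [pw_snoc, tOp, Finset.mul_sum]
    refine Finset.sum_congr rfl fun b _ => ?_
    rw [Fin.snoc_last (α := fun _ => A) b x]
    ring

lemma pw_sum {Q : A → A → ℝ} {η : A → ℝ} (hQ : ∀ x, ∑ y, Q x y = 1) (hηsum : ∑ a, η a = 1)
    (n : ℕ) : ∑ x, pw Q η n x = 1 := by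
  have h := pw_marginal Q η n (fun _ => 1)
  have h2 : ∀ t, (tOp Q)^[t] (fun _ => (1:ℝ)) = fun _ => 1 := by
    intro t
    ext x
    rw [tOp_iter]
    simp [mpow_sum hQ]
  simpa [h2, hηsum] using h

/-- Number of visits to `a` strictly before time `n`. -/
def cnt (n : ℕ) (a : A) (x : Fin (n + 1) → A) : ℕ :=
  ∑ i : Fin n, if x i.castSucc = a then 1 else 0

lemma second_moment [Nonempty A] {Q : A → A → ℝ} {η : A → ℝ}
    (hQnn : ∀ x y, 0 ≤ Q x y) (hQ : ∀ x, ∑ y, Q x y = 1)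
    (hηnn : ∀ a, 0 ≤ η a) (hηsum : ∑ a, η a = 1) (f h : A → ℝ)
    (hP : ∀ x, h x = f x + tOp Q h x) :
    ∃ B : ℝ, 0 ≤ B ∧ ∀ n, ∑ x, pw Q η n x * (∑ i : Fin n, f (x i.castSucc)) ^ 2 ≤ B * (n + 1) := by
  set H := ‖h‖ with hH
  have hH0 : 0 ≤ H := norm_nonneg _
  have hh : ∀ x, |h x| ≤ H := fun x => norm_le_pi_norm h x
  have hhT : ∀ x, |tOp Q h x| ≤ H := fun x =>
    (norm_le_pi_norm (tOp Q h) x).trans (tOp_norm hQnn hQ h)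
  have hM : ∀ n, ∑ x, pw Q η n x * (∑ i : Fin n, f (x i.castSucc) + h (x (Fin.last n))) ^ 2
      ≤ 4 * H ^ 2 * (n + 1) := by
    intro n
    induction n with
    | zero =>
      calc _ ≤ ∑ x, pw Q η 0 x * H ^ 2 := by
            refine Finset.sum_le_sum fun x _ => ?_
            refine mul_le_mul_of_nonneg_left ?_ (pw_nonneg hQnn hηnn _ _)
            simp only [Finset.univ_eq_empty, Finset.sum_empty, zero_add]
            exact sq_le_sq' (neg_le_of_abs_le (hh _)) (le_of_abs_le (hh _))
        _ ≤ _ := by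
          rw [← Finset.sum_mul, pw_sum hQ hηsum]
          push_cast
          nlinarith [sq_nonneg H]
    | succ n ih =>
      rw [sum_snoc]
      have step : ∀ x : Fin (n+1) → A, ∑ b, pw Q η (n+1) (Fin.snoc x b : Fin (n+2) → A) *
          (∑ i : Fin (n+1), f ((Fin.snoc x b : Fin (n+2) → A) i.castSucc) +
            h ((Fin.snoc x b : Fin (n+2) → A) (Fin.last (n+1)))) ^ 2 ≤
          pw Q η n x * (∑ i : Fin n, f (x i.castSucc) + h (x (Fin.last n))) ^ 2 +
            pw Q η n x * (4 * H ^ 2) := by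
        intro x
        have h1 : ∀ b, ∀ i : Fin (n+1), (Fin.snoc x b : Fin (n + 2) → A) i.castSucc = x i :=
          fun b i => Fin.snoc_castSucc (α := fun _ => A) b x i
        have h2 : ∀ b, (Fin.snoc x b : Fin (n + 2) → A) (Fin.last _) = b := fun b =>
          Fin.snoc_last (α := fun _ => A) b x
        simp only [pw_snoc, h1, h2]
        rw [Fin.sum_univ_castSucc]
        set S := ∑ i : Fin n, f (x i.castSucc)
        set y := x (Fin.last n)
        have e : ∀ b, pw Q η n x * Q y b * (S + f y + h b) ^ 2 =
            pw Q η n x * (Q y b * (S + h y) ^ 2 + 2 * (S + h y) * (Q y b * h b)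
              - 2 * (S + h y) * tOp Q h y * Q y b + Q y b * (h b - tOp Q h y) ^ 2) := by
          intro b
          have : f y = h y - tOp Q h y := by linarith [hP y]
          rw [this]; ring
        simp only [e]
        rw [← Finset.mul_sum, ← mul_add]
        refine mul_le_mul_of_nonneg_left ?_ (pw_nonneg hQnn hηnn _ _)
        rw [Finset.sum_add_distrib, Finset.sum_sub_distrib, Finset.sum_add_distrib,
          ← Finset.sum_mul, ← Finset.mul_sum, ← Finset.mul_sum, hQ]
        have e2 : ∑ b, Q y b * h b = tOp Q h y := rfl
        rw [e2]
        have e3 : ∑ b, Q y b * (h b - tOp Q h y) ^ 2 ≤ ∑ b, Q y b * (4 * H ^ 2) := by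
          refine Finset.sum_le_sum fun b _ => ?_
          refine mul_le_mul_of_nonneg_left ?_ (hQnn _ _)
          have a1 := abs_le.1 (hh b)
          have a2 := abs_le.1 (hhT y)
          nlinarith
        rw [← Finset.sum_mul, hQ] at e3
        linarith
      refine (Finset.sum_le_sum fun x _ => step x).trans ?_
      rw [Finset.sum_add_distrib, ← Finset.sum_mul, pw_sum hQ hηsum]
      push_cast
      linarith
  refine ⟨10 * H ^ 2, by positivity, fun n => ?_⟩
  calc _ ≤ ∑ x, (2 * (pw Q η n x * (∑ i : Fin n, f (x i.castSucc) + h (x (Fin.last n))) ^ 2) +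
        pw Q η n x * (2 * H ^ 2)) := by
        refine Finset.sum_le_sum fun x _ => ?_
        have hw := pw_nonneg hQnn hηnn n x
        set S := ∑ i : Fin n, f (x i.castSucc)
        have : S ^ 2 ≤ 2 * (S + h (x (Fin.last n))) ^ 2 + 2 * H ^ 2 := by
          have a1 := abs_le.1 (hh (x (Fin.last n)))
          nlinarith [sq_nonneg (S + 2 * h (x (Fin.last n)))]
        nlinarith
    _ ≤ _ := by
      rw [Finset.sum_add_distrib, ← Finset.mul_sum, ← Finset.sum_mul, pw_sum hQ hηsum]
      have := hM n
      have hn : (0:ℝ) ≤ n := by positivity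
      nlinarith [mul_nonneg hn (sq_nonneg H)]

end Chain

lemma ffun_term_le {q : ℝ} (h0 : 0 ≤ q) (h1 : q ≤ 1) (r m : ℕ) :
    (m.choose r : ℝ) * (q ^ (r + 1) * (1 - q) ^ (m - r)) ≤ q := by
  have h2 : 0 ≤ 1 - q := by linarith
  rcases lt_or_ge m r with h | h
  · simpa [Nat.choose_eq_zero_of_lt h] using h0
  · have h3 : (m.choose r : ℝ) * (q ^ r * (1 - q) ^ (m - r)) ≤ 1 := by
      have e := add_pow q (1 - q) m
      rw [add_sub_cancel, one_pow] at e
      have := Finset.single_le_sum (s := Finset.range (m+1))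
        (f := fun i => q ^ i * (1 - q) ^ (m - i) * (m.choose i : ℝ)) (fun i _ => by positivity)
        (Finset.mem_range.2 (Nat.lt_succ_of_le h))
      linarith
    calc _ = q * ((m.choose r : ℝ) * (q ^ r * (1 - q) ^ (m - r))) := by ring
      _ ≤ q * 1 := by gcongr
      _ = q := mul_one q

lemma ffun_summable {q : ℕ → ℝ} (h0 : ∀ k, 0 ≤ q k) (h1 : ∀ k, q k ≤ 1) (hs : Summable q)
    (r m : ℕ) : Summable fun k => (m.choose r : ℝ) * (q k ^ (r + 1) * (1 - q k) ^ (m - r)) :=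
  Summable.of_nonneg_of_le (fun k => by
      have := h0 k
      have : 0 ≤ 1 - q k := by linarith [h1 k]
      positivity) (fun k => ffun_term_le (h0 k) (h1 k) r m) hs

lemma ffun_nonneg {q : ℕ → ℝ} (h0 : ∀ k, 0 ≤ q k) (h1 : ∀ k, q k ≤ 1)
    (r m : ℕ) : 0 ≤ ffun q r m := by
  unfold ffun
  refine mul_nonneg (by positivity) (tsum_nonneg fun k => ?_)
  have := h0 k
  have : 0 ≤ 1 - q k := by linarith [h1 k]
  positivity

lemma ffun_le {q : ℕ → ℝ} (h0 : ∀ k, 0 ≤ q k) (h1 : ∀ k, q k ≤ 1) (hs : HasSum q 1)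
    (r m : ℕ) : ffun q r m ≤ 1 := by
  unfold ffun
  rw [← tsum_mul_left]
  refine le_trans ?_ hs.tsum_eq.le
  exact (ffun_summable h0 h1 hs.summable r m).tsum_le_tsum
    (fun k => ffun_term_le (h0 k) (h1 k) r m) hs.summable

lemma W_atTop {A : Type*} {p : A → ℕ → ℝ} {a : A} (hp : Summable (p a))
    (hpnn : ∀ k, 0 ≤ p a k) {α : ℝ} (hα : 0 < α)
    {ℓ : ℝ → ℝ} {D : ℝ} (hD : 0 < D)
    (hsv : SlowlyVarying ℓ) (hpos : ∀ x, 1 ≤ x → 0 < ℓ x)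
    (hRV : Tendsto (fun ε : ℝ => nuR p a ε / (ε ^ (-α) * ℓ (1 / ε)))
      (nhdsWithin 0 (Set.Ioi 0)) (nhds D)) :
    Tendsto (fun x : ℝ => x ^ α * ℓ x) atTop atTop := by
  set U : ℝ → ℝ := fun x => nuR p a (1 / max x 1) with hU
  have hmono : Monotone U := fun x y hxy => nuR_anti hp hpnn (by positivity) (by gcongr)
  have hUW : Tendsto (fun x => U x / (x ^ α * ℓ x)) atTop (nhds D) := by
    refine (nu_tendsto_inv hRV).congr' ?_
    filter_upwards [eventually_ge_atTop 1] with x hx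
    simp only [hU, max_eq_left hx]
  have hU0 : ∀ x, 0 ≤ U x := fun x => nuR_nonneg _ _ _
  have hWpos : ∀ x, 1 ≤ x → 0 < x ^ α * ℓ x := fun x hx => by
    have := hpos x hx
    have : 0 < x := by linarith
    positivity
  have hUpos : ∀ᶠ x in atTop, 0 < U x := by
    filter_upwards [hUW.eventually (lt_mem_nhds hD), eventually_ge_atTop 1] with x h1 h2
    exact (div_pos_iff_of_pos_right (hWpos x h2)).1 h1
  rcases tendsto_atTop_of_monotone hmono with h | ⟨V, hV⟩
  · have h2 := h.atTop_mul_pos (inv_pos.2 hD) (hUW.inv₀ hD.ne')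
    refine h2.congr' ?_
    filter_upwards [hUpos] with x h1
    rw [inv_div]
    field_simp
  · exfalso
    have hVpos : 0 < V := by
      obtain ⟨x, hx⟩ := hUpos.exists
      exact hx.trans_le (hmono.ge_of_tendsto hV x)
    have hW : Tendsto (fun x => x ^ α * ℓ x) atTop (nhds (V / D)) := by
      refine (hV.div hUW hD.ne').congr' ?_
      filter_upwards [hUpos, eventually_ge_atTop 1] with x h1 h2
      have := hWpos x h2
      simp only [Pi.div_apply]
      field_simp
    have h2x : Tendsto (fun x : ℝ => 2 * x) atTop atTop := tendsto_id.const_mul_atTop two_pos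
    have hr := (hW.comp h2x).div hW (by positivity)
    rw [div_self (by positivity)] at hr
    have hr2 := (hsv 2 two_pos).const_mul ((2:ℝ) ^ α)
    have := tendsto_nhds_unique (hr.congr' ?_) hr2
    · have h1 : (1:ℝ) < 2 ^ α := Real.one_lt_rpow (by norm_num) hα
      linarith
    · filter_upwards [eventually_ge_atTop 1] with x hx
      have hx0 : 0 < x := by linarith
      have := hpos x hx
      have : 0 < x ^ α := by positivity
      simp only [Pi.div_apply, Function.comp, Real.mul_rpow two_pos.le hx0.le]
      field_simp

lemma chain_limit {A : Type*} [Fintype A] [DecidableEq A] [Nonempty A] {Q : A → A → ℝ}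
    {π η : A → ℝ}
    (hQnn : ∀ x y, 0 ≤ Q x y) (hQ : ∀ x, ∑ y, Q x y = 1)
    (hprim : ∃ t : ℕ, ∀ a b, 0 < mpow Q t a b)
    (hπpos : ∀ x, 0 < π x) (hπsum : ∑ x, π x = 1)
    (hstat : ∀ x, ∑ y, π y * Q y x = π x)
    (hηnn : ∀ a, 0 ≤ η a) (hηsum : ∑ a, η a = 1) (a : A)
    (φ : ℕ → ℕ → ℝ) (s : ℕ → ℝ) (L : ℝ)
    (hs : Tendsto (fun n : ℕ => (n : ℝ) * s n) atTop atTop)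
    (hφ : ∀ᶠ n in atTop, ∀ m, |φ n m| ≤ 1 / s n)
    (hlim : Tendsto (fun z : ℕ × ℕ => φ z.1 z.2) (ratioFilter (π a)) (nhds L)) :
    Tendsto (fun n => ∑ x, pw Q η n x * (if x (Fin.last n) = a then φ n (cnt n a x) else 0))
      atTop (nhds (π a * L)) := by
  set f : A → ℝ := fun b => (if b = a then 1 else 0) - π a with hf
  have hπf : ∑ x, π x * f x = 0 := by
    simp [hf, mul_sub, Finset.sum_sub_distrib, ← Finset.sum_mul, hπsum]
  have hsum := tOp_summable hQnn hQ hprim hπpos hπsum hstat f hπf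
  obtain ⟨h, hP⟩ := poisson_eq hsum
  obtain ⟨B, hB0, hB⟩ := second_moment hQnn hQ hηnn hηsum f h hP
  -- marginals
  have hmarg : Tendsto (fun n => ∑ x, pw Q η n x * (if x (Fin.last n) = a then L else 0))
      atTop (nhds (π a * L)) := by
    have h1 : Tendsto (fun n => L * ∑ b, η b * (tOp Q)^[n] f b + π a * L) atTop
        (nhds (L * ∑ b, η b * 0 + π a * L)) := by
      have h0 : ∀ b, Tendsto (fun n => (tOp Q)^[n] f b) atTop (nhds 0) := fun b =>
        squeeze_zero_norm (fun n => norm_le_pi_norm ((tOp Q)^[n] f) b)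
          hsum.tendsto_atTop_zero
      have h00 : Tendsto (fun n => ∑ b, η b * (tOp Q)^[n] f b) atTop (nhds (∑ b, η b * 0)) :=
        tendsto_finsetSum _ fun b _ => (h0 b).const_mul (η b)
      exact (h00.const_mul L).add_const _
    simp only [mul_zero, Finset.sum_const_zero, zero_add] at h1
    refine h1.congr fun n => ?_
    rw [← pw_marginal]
    have e : π a * L = ∑ x, pw Q η n x * (π a * L) := by
      rw [← Finset.sum_mul, pw_sum hQ hηsum, one_mul]
    rw [e, Finset.mul_sum, ← Finset.sum_add_distrib]
    refine Finset.sum_congr rfl fun x _ => ?_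
    simp only [hf]
    split_ifs <;> ring
  have hS : ∀ n (x : Fin (n+1) → A), ∑ i : Fin n, f (x i.castSucc) = cnt n a x - n * π a := by
    intro n x
    simp only [hf, cnt, Finset.sum_sub_distrib]
    push_cast
    simp
  have hdiff : Tendsto (fun n => ∑ x, pw Q η n x *
      (if x (Fin.last n) = a then φ n (cnt n a x) - L else 0)) atTop (nhds 0) := by
    rw [Metric.tendsto_nhds]
    intro ε hε
    have hev : ∀ᶠ z in ratioFilter (π a), |φ z.1 z.2 - L| < ε / 2 := by
      have := Metric.tendsto_nhds.1 hlim (ε / 2) (by positivity)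
      simpa [Real.dist_eq] using this
    have hbasis := (atTop_basis.comap (Prod.fst : ℕ × ℕ → ℕ)).inf
      ((Metric.nhds_basis_ball (x := π a)).comap (fun z : ℕ × ℕ => (z.2 : ℝ) / (z.1 : ℝ)))
    obtain ⟨⟨n₀, δ⟩, ⟨-, hδ⟩, hsub⟩ := hbasis.eventually_iff.1 hev
    simp only at hδ
    have herr : Tendsto (fun n : ℕ => (2 * B / δ ^ 2) * (1 / (n * s n) + |L| / n)) atTop
        (nhds ((2 * B / δ ^ 2) * (0 + 0))) :=
      ((hs.const_div_atTop 1).add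
        (tendsto_natCast_atTop_atTop.const_div_atTop _)).const_mul _
    rw [add_zero, mul_zero] at herr
    filter_upwards [hφ, eventually_ge_atTop n₀, eventually_ge_atTop 1,
      herr.eventually (gt_mem_nhds (half_pos hε)), hs.eventually_gt_atTop 0]
      with n hn1 hn2 hn3 hn4 hn5
    have hn3' : (1:ℝ) ≤ n := by exact_mod_cast hn3
    have hn0 : (0:ℝ) < n := by linarith
    have hsn : 0 < s n := (pos_iff_pos_of_mul_pos hn5).1 hn0
    rw [Real.dist_eq, sub_zero]
    set R := 1 / s n + |L| with hR
    have hR0 : 0 < R := by positivity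
    have hterm : ∀ m : ℕ, |φ n m - L| ≤ ε / 2 + R / (δ ^ 2 * n ^ 2) * ((m : ℝ) - n * π a) ^ 2 := by
      intro m
      have hsq : 0 ≤ R / (δ ^ 2 * n ^ 2) * ((m : ℝ) - n * π a) ^ 2 := by positivity
      by_cases hm : |(m : ℝ) / n - π a| < δ
      · have := @hsub (n, m) ⟨hn2, by simpa [Real.dist_eq] using hm⟩
        simp only at this
        linarith
      · have h1 : |φ n m - L| ≤ R := (abs_sub _ _).trans (add_le_add (hn1 m) le_rfl)
        have h2 : δ ^ 2 ≤ ((m : ℝ) / n - π a) ^ 2 := by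
          rw [← sq_abs ((m : ℝ) / n - π a)]
          exact pow_le_pow_left₀ hδ.le (not_lt.1 hm) 2
        have h3 : R / (δ ^ 2 * n ^ 2) * ((m : ℝ) - n * π a) ^ 2 =
            R * (((m : ℝ) / n - π a) ^ 2 / δ ^ 2) := by
          field_simp
        have h4 : 1 ≤ ((m : ℝ) / n - π a) ^ 2 / δ ^ 2 := by
          rw [le_div_iff₀ (by positivity)]; linarith
        rw [h3]
        nlinarith
    calc |∑ x, pw Q η n x * (if x (Fin.last n) = a then φ n (cnt n a x) - L else 0)|
        ≤ ∑ x, |pw Q η n x * (if x (Fin.last n) = a then φ n (cnt n a x) - L else 0)| :=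
          Finset.abs_sum_le_sum_abs _ _
      _ ≤ ∑ x, (pw Q η n x * (ε / 2) + R / (δ ^ 2 * n ^ 2) *
            (pw Q η n x * (∑ i : Fin n, f (x i.castSucc)) ^ 2)) := by
          refine Finset.sum_le_sum fun x _ => ?_
          have hw := pw_nonneg hQnn hηnn n x
          rw [abs_mul, abs_of_nonneg hw, hS]
          have : |if x (Fin.last n) = a then φ n (cnt n a x) - L else 0| ≤
              ε / 2 + R / (δ ^ 2 * n ^ 2) * ((cnt n a x : ℝ) - n * π a) ^ 2 := by
            split_ifs
            · exact hterm _
            · rw [abs_zero]; positivity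
          calc _ ≤ pw Q η n x *
                (ε / 2 + R / (δ ^ 2 * n ^ 2) * ((cnt n a x : ℝ) - n * π a) ^ 2) := by gcongr
            _ = _ := by ring
      _ ≤ ε / 2 + R / (δ ^ 2 * n ^ 2) * (B * (n + 1)) := by
          rw [Finset.sum_add_distrib, ← Finset.sum_mul, pw_sum hQ hηsum, one_mul,
            ← Finset.mul_sum]
          gcongr
          exact hB n
      _ ≤ ε / 2 + R / (δ ^ 2 * n ^ 2) * (B * (2 * n)) := by
          gcongr
          linarith
      _ = ε / 2 + (2 * B / δ ^ 2) * (1 / (n * s n) + |L| / n) := by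
          rw [hR]; field_simp
      _ < ε := by linarith
  have := hdiff.add hmarg
  rw [zero_add] at this
  refine this.congr fun n => ?_
  rw [← Finset.sum_add_distrib]
  refine Finset.sum_congr rfl fun x _ => ?_
  split_ifs <;> ring

section Prob

lemma tsum_pi_prod (n : ℕ) (g : Fin n → ℕ → ℝ≥0∞) :
    ∑' k : Fin n → ℕ, ∏ i, g i (k i) = ∏ i, ∑' j, g i j := by
  induction n with
  | zero => simp
  | succ n ih =>
    rw [← (Fin.snocEquiv (fun _ : Fin (n+1) => ℕ)).tsum_eq, ENNReal.tsum_prod',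
      Fin.prod_univ_castSucc, ← ih, mul_comm, ← ENNReal.tsum_mul_right]
    refine tsum_congr fun j => ?_
    rw [← ENNReal.tsum_mul_left]
    refine tsum_congr fun k => ?_
    rw [Fin.prod_univ_castSucc, mul_comm]
    have h1 : ∀ i : Fin n, (Fin.snocEquiv (fun _ : Fin (n+1) => ℕ)) (j, k) i.castSucc = k i :=
      fun i => Fin.snoc_castSucc (α := fun _ => ℕ) j k i
    have h2 : (Fin.snocEquiv (fun _ : Fin (n+1) => ℕ)) (j, k) (Fin.last n) = j :=
      Fin.snoc_last (α := fun _ => ℕ) j k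
    simp only [h1, h2]

lemma measure_partition {Ω ι : Type*} [MeasurableSpace Ω] (P : Measure Ω) [IsProbabilityMeasure P]
    [Countable ι] (E : ι → Set Ω) (hE : ⋃ i, E i = Set.univ) (h1 : ∑' i, P (E i) = 1)
    (B : Set ι) [DecidablePred (· ∈ B)] :
    P (⋃ i ∈ B, E i) = ∑' i, if i ∈ B then P (E i) else 0 := by
  have hle : ∀ (B : Set ι) [DecidablePred (· ∈ B)],
      P (⋃ i ∈ B, E i) ≤ ∑' i, if i ∈ B then P (E i) else 0 := by
    intro B _
    refine (measure_iUnion_le _).trans (ENNReal.tsum_le_tsum fun i => ?_)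
    split_ifs with h <;> simp [h]
  refine le_antisymm (hle B) ?_
  classical
  have h2 := hle Bᶜ
  have h3 : (∑' i, if i ∈ B then P (E i) else 0) + (∑' i, if i ∈ Bᶜ then P (E i) else 0) = 1 := by
    rw [← ENNReal.tsum_add, ← h1]
    refine tsum_congr fun i => ?_
    by_cases h : i ∈ B <;> simp [h]
  have h4 : 1 ≤ P (⋃ i ∈ B, E i) + P (⋃ i ∈ Bᶜ, E i) := by
    rw [← measure_univ (μ := P)]
    refine (measure_mono ?_).trans (measure_union_le _ _)
    rw [← hE]
    refine Set.iUnion_subset fun i ω hω => ?_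
    by_cases h : i ∈ B
    · exact Or.inl (Set.mem_biUnion h hω)
    · exact Or.inr (Set.mem_biUnion (show i ∈ Bᶜ from h) hω)
  have hfin : (∑' i, if i ∈ Bᶜ then P (E i) else 0) ≠ ∞ := by
    refine ne_top_of_le_ne_top one_ne_top ?_
    rw [← h3]; exact le_add_self
  rw [← h3] at h4
  have h5 := h4.trans (add_le_add_right h2 _)
  exact (ENNReal.add_le_add_iff_right hfin).1 h5

/-- The binomial sum. -/
lemma binomial_tsum {n r : ℕ} (T : Finset (Fin n)) (q : Fin n → ℕ → ℝ≥0∞) (j : ℕ) (u v : ℝ≥0∞)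
    (hq : ∀ i, ∑' k, q i k = 1) (hu : ∀ i ∈ T, q i j = u)
    (hv : ∀ i ∈ T, ∑' k, (if k = j then 0 else q i k) = v) :
    ∑' k : Fin n → ℕ, (if (T.filter (fun i => k i = j)).card = r then ∏ i, q i (k i) else 0) =
      (T.card.choose r : ℝ≥0∞) * (u ^ r * v ^ (T.card - r)) := by
  classical
  set g : Finset (Fin n) → Fin n → ℕ → ℝ≥0∞ := fun U i k =>
    if i ∈ T then (if (i ∈ U ↔ k = j) then q i k else 0) else q i k with hg
  have h1 : ∀ k : Fin n → ℕ,
      (if (T.filter (fun i => k i = j)).card = r then ∏ i, q i (k i) else 0) =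
      ∑ U ∈ T.powersetCard r, ∏ i, g U i (k i) := by
    intro k
    have h2 : ∀ U ∈ T.powersetCard r, ∏ i, g U i (k i) =
        if T.filter (fun i => k i = j) = U then ∏ i, q i (k i) else 0 := by
      intro U hU
      rw [Finset.mem_powersetCard] at hU
      split_ifs with h
      · refine Finset.prod_congr rfl fun i _ => ?_
        simp only [hg]
        split_ifs with h3 h4
        · rfl
        · exact absurd (by rw [← h]; simp [h3]) h4
        · rfl
      · obtain ⟨i, hiT, hi⟩ : ∃ i ∈ T, ¬ (i ∈ U ↔ k i = j) := by
          by_contra hcon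
          push Not at hcon
          apply h
          ext i
          rw [Finset.mem_filter]
          constructor
          · rintro ⟨h3, h4⟩
            exact (hcon i h3).2 h4
          · intro h3
            exact ⟨hU.1 h3, (hcon i (hU.1 h3)).1 h3⟩
        refine Finset.prod_eq_zero (Finset.mem_univ i) ?_
        simp only [hg, hiT, hi, if_true, if_false]
    rw [Finset.sum_congr rfl h2, Finset.sum_ite_eq]
    simp [Finset.mem_powersetCard]
  simp only [h1]
  rw [Summable.tsum_finsetSum fun _ _ => ENNReal.summable]
  have h3 : ∀ U ∈ T.powersetCard r, ∑' k : Fin n → ℕ, ∏ i, g U i (k i) =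
      u ^ r * v ^ (T.card - r) := by
    intro U hU
    rw [Finset.mem_powersetCard] at hU
    rw [tsum_pi_prod]
    have h4 : ∀ i, ∑' k, g U i k = if i ∈ U then u else if i ∈ T then v else 1 := by
      intro i
      simp only [hg]
      split_ifs with h5 h6 h6
      · rw [← hu i h5, tsum_eq_single j]
        · simp [h6]
        · intro k hk; simp [h6, hk]
      · rw [← hv i h5]
        refine tsum_congr fun k => ?_
        by_cases hk : k = j <;> simp [h6, hk]
      · exact absurd (hU.1 h6) h5
      · exact hq i
    simp only [h4]
    rw [Finset.prod_ite, Finset.prod_ite]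
    simp only [Finset.prod_const, Finset.prod_const_one, mul_one]
    have c1 : (Finset.univ.filter (fun i => i ∈ U)) = U := by ext i; simp
    have c2 : ((Finset.univ.filter (fun i => i ∉ U)).filter (fun i => i ∈ T)) = T \ U := by
      ext i; simp [and_comm]
    rw [c1, c2, Finset.card_sdiff_of_subset hU.1, hU.2]
    simp
  rw [Finset.sum_congr rfl h3, Finset.sum_const, Finset.card_powersetCard, nsmul_eq_mul]

end Prob

lemma prob_formula {A : Type*} [Fintype A] [DecidableEq A]
    {Ω : Type*} [MeasurableSpace Ω] (P : Measure Ω) [IsProbabilityMeasure P]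
    (Z : ℕ → Ω → A × ℕ) (Q : A → A → ℝ) (η : A → ℝ)
    (hQnn : ∀ x y, 0 ≤ Q x y) (hQ : ∀ x, ∑ y, Q x y = 1)
    (hηnn : ∀ a, 0 ≤ η a) (hηsum : ∑ a, η a = 1)
    (p : A → ℕ → ℝ) (hpnn : ∀ a k, 0 ≤ p a k) (hp : ∀ a, HasSum (p a) 1)
    (hp1 : ∀ a k, p a k ≤ 1)
    (hZ : ∀ (n : ℕ) (a : ℕ → A) (k : ℕ → ℕ),
      P (⋂ i ∈ Finset.range (n + 1), {ω | Z i ω = (a i, k i)}) =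
        ENNReal.ofReal ((η (a 0) * ∏ i ∈ Finset.range n, Q (a i) (a (i + 1))) *
          ∏ i ∈ Finset.range (n + 1), p (a i) (k i))) (r n : ℕ) :
    (P {ω | (∑ i ∈ Finset.range n, if Z i ω = Z n ω then 1 else 0 : ℕ) = r}).toReal =
      ∑ x, pw Q η n x * ffun (p (x (Fin.last n))) r (cnt n (x (Fin.last n)) x) := by
  classical
  set E : (Fin (n+1) → A) × (Fin (n+1) → ℕ) → Set Ω := fun s =>
    {ω | ∀ i : Fin (n+1), Z i ω = (s.1 i, s.2 i)} with hE
  have hPE : ∀ s, P (E s) = ENNReal.ofReal (pw Q η n s.1) *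
      ∏ i, ENNReal.ofReal (p (s.1 i) (s.2 i)) := by
    intro s
    have h := hZ n (fun i => s.1 (Fin.ofNat (n+1) i)) (fun i => s.2 (Fin.ofNat (n+1) i))
    have e1 : (⋂ i ∈ Finset.range (n + 1),
        {ω | Z i ω = (s.1 (Fin.ofNat (n+1) i), s.2 (Fin.ofNat (n+1) i))}) = E s := by
      ext ω
      simp only [hE, Set.mem_iInter, Set.mem_setOf_eq, Finset.mem_range]
      constructor
      · intro h i
        have := h i i.2
        simpa using this
      · intro h i hi
        have := h ⟨i, hi⟩
        have e : Fin.ofNat (n+1) i = ⟨i, hi⟩ := by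
          ext; simp [Nat.mod_eq_of_lt hi]
        rw [e]; exact this
    rw [e1] at h
    rw [h, ENNReal.ofReal_mul (by
        exact mul_nonneg (hηnn _) (Finset.prod_nonneg fun _ _ => hQnn _ _)),
      ENNReal.ofReal_prod_of_nonneg (fun _ _ => hpnn _ _)]
    congr 1
    · congr 1
      rw [Finset.prod_range, pw]
      congr 1
      refine Finset.prod_congr rfl fun i _ => ?_
      have e2 : Fin.ofNat (n+1) (i : ℕ) = i.castSucc := by
        ext; simp [Nat.mod_eq_of_lt (Nat.lt_succ_of_lt i.2)]
      have e3 : Fin.ofNat (n+1) ((i : ℕ) + 1) = i.succ := by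
        ext; simp [Nat.mod_eq_of_lt (Nat.succ_lt_succ i.2)]
      rw [e2, e3]
    · rw [Finset.prod_range]
      refine Finset.prod_congr rfl fun i _ => ?_
      simp
  have hq : ∀ a, ∑' k, ENNReal.ofReal (p a k) = 1 := fun a => by
    rw [← ENNReal.ofReal_tsum_of_nonneg (hpnn a) (hp a).summable, (hp a).tsum_eq,
      ENNReal.ofReal_one]
  have htot : ∑' s, P (E s) = 1 := by
    simp only [hPE]
    rw [ENNReal.tsum_prod', tsum_fintype]
    simp only [ENNReal.tsum_mul_left]
    have : ∀ x : Fin (n+1) → A,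
        ∑' k : Fin (n+1) → ℕ, ∏ i, ENNReal.ofReal (p (x i) (k i)) = 1 := fun x => by
      rw [tsum_pi_prod (n+1) (fun i k => ENNReal.ofReal (p (x i) k))]
      simp [hq]
    simp only [this, mul_one]
    rw [← ENNReal.ofReal_sum_of_nonneg fun x _ => pw_nonneg hQnn hηnn n x, pw_sum hQ hηsum,
      ENNReal.ofReal_one]
  have hcov : ⋃ s, E s = Set.univ := by
    refine Set.eq_univ_of_forall fun ω => Set.mem_iUnion.2
      ⟨(fun i => (Z i ω).1, fun i => (Z i ω).2), fun i => rfl⟩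
  set B : Set ((Fin (n+1) → A) × (Fin (n+1) → ℕ)) := {s |
    ((Finset.univ.filter (fun i : Fin n => s.1 i.castSucc = s.1 (Fin.last n))).filter
      (fun i => s.2 i.castSucc = s.2 (Fin.last n))).card = r} with hB
  have hset : {ω | (∑ i ∈ Finset.range n, if Z i ω = Z n ω then 1 else 0 : ℕ) = r} =
      ⋃ s ∈ B, E s := by
    have key : ∀ ω, ∀ s, ω ∈ E s →
        ((∑ i ∈ Finset.range n, if Z i ω = Z n ω then 1 else 0 : ℕ) = r ↔ s ∈ B) := by
      intro ω s hs
      have hs' : ∀ i : Fin (n+1), Z i ω = (s.1 i, s.2 i) := hs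
      have e1 : Z n ω = (s.1 (Fin.last n), s.2 (Fin.last n)) := hs' (Fin.last n)
      have e2 : ∀ i : Fin n, Z i ω = (s.1 i.castSucc, s.2 i.castSucc) := fun i => hs' i.castSucc
      rw [Finset.sum_range]
      simp only [e1, e2, hB, Set.mem_setOf_eq, Prod.mk.injEq]
      rw [Finset.filter_filter, Finset.card_filter]
    ext ω
    simp only [Set.mem_setOf_eq, Set.mem_iUnion]
    obtain ⟨s, hs⟩ := Set.mem_iUnion.1 (hcov.symm ▸ Set.mem_univ ω : ω ∈ ⋃ s, E s)
    constructor
    · intro h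
      exact ⟨s, (key ω s hs).1 h, hs⟩
    · rintro ⟨s', h1, h2⟩
      exact (key ω s' h2).2 h1
  rw [hset, measure_partition P E hcov htot B]
  simp only [hPE]
  rw [ENNReal.tsum_prod', tsum_fintype]
  have hx : ∀ x : Fin (n+1) → A, ∑' k : Fin (n+1) → ℕ, (if (x, k) ∈ B then
      ENNReal.ofReal (pw Q η n x) * ∏ i, ENNReal.ofReal (p (x i) (k i)) else 0) =
      ENNReal.ofReal (pw Q η n x * ffun (p (x (Fin.last n))) r (cnt n (x (Fin.last n)) x)) := by
    intro x
    rw [ENNReal.ofReal_mul (pw_nonneg hQnn hηnn n x)]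
    have e1 : ∀ k : Fin (n+1) → ℕ, (if (x, k) ∈ B then
      ENNReal.ofReal (pw Q η n x) * ∏ i, ENNReal.ofReal (p (x i) (k i)) else 0) =
      ENNReal.ofReal (pw Q η n x) *
        (if (x, k) ∈ B then ∏ i, ENNReal.ofReal (p (x i) (k i)) else 0) := by
      intro k; split_ifs <;> simp
    simp only [e1]
    rw [ENNReal.tsum_mul_left]
    congr 1
    set a := x (Fin.last n) with ha
    set T := Finset.univ.filter (fun i : Fin n => x i.castSucc = a) with hT
    have hTc : T.card = cnt n a x := by rw [hT, cnt, Finset.card_filter]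
    rw [← (Fin.snocEquiv (fun _ : Fin (n+1) => ℕ)).tsum_eq, ENNReal.tsum_prod']
    have h1 : ∀ j (k : Fin n → ℕ), ∀ i : Fin n,
        (Fin.snocEquiv (fun _ : Fin (n+1) => ℕ)) (j, k) i.castSucc = k i :=
      fun j k i => Fin.snoc_castSucc (α := fun _ => ℕ) j k i
    have h2 : ∀ j (k : Fin n → ℕ),
        (Fin.snocEquiv (fun _ : Fin (n+1) => ℕ)) (j, k) (Fin.last n) = j :=
      fun j k => Fin.snoc_last (α := fun _ => ℕ) j k
    have e2 : ∀ j, ∑' k : Fin n → ℕ,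
        (if (x, (Fin.snocEquiv (fun _ : Fin (n+1) => ℕ)) (j, k)) ∈ B then
          ∏ i, ENNReal.ofReal (p (x i) ((Fin.snocEquiv (fun _ : Fin (n+1) => ℕ)) (j, k) i))
          else 0) = ENNReal.ofReal ((T.card.choose r : ℝ) *
            (p a j ^ (r + 1) * (1 - p a j) ^ (T.card - r))) := by
      intro j
      have hnn : 0 ≤ 1 - p a j := by linarith [hp1 a j]
      have hb := binomial_tsum (r := r) T (fun i k => ENNReal.ofReal (p (x i.castSucc) k)) j
        (ENNReal.ofReal (p a j)) (ENNReal.ofReal (1 - p a j)) (fun i => hq _)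
        (fun i hi => by rw [(Finset.mem_filter.1 hi).2])
        (fun i hi => by
          rw [(Finset.mem_filter.1 hi).2]
          have h3 := ENNReal.tsum_eq_add_tsum_ite (f := fun k => ENNReal.ofReal (p a k)) j
          rw [hq a] at h3
          have h4 : ENNReal.ofReal (p a j) + ENNReal.ofReal (1 - p a j) = 1 := by
            rw [← ENNReal.ofReal_add (hpnn a j) hnn]; simp
          rw [← h4] at h3
          convert ((ENNReal.add_right_inj ENNReal.ofReal_ne_top).1 h3).symm)
      have e3 : ENNReal.ofReal ((T.card.choose r : ℝ) *
            (p a j ^ (r + 1) * (1 - p a j) ^ (T.card - r))) = ENNReal.ofReal (p a j) *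
          ((T.card.choose r : ℝ≥0∞) * (ENNReal.ofReal (p a j) ^ r *
            ENNReal.ofReal (1 - p a j) ^ (T.card - r))) := by
        rw [ENNReal.ofReal_mul (by positivity),
          ENNReal.ofReal_mul (pow_nonneg (hpnn a j) _), ENNReal.ofReal_pow (hpnn a j),
          ENNReal.ofReal_pow hnn, ENNReal.ofReal_natCast]
        ring
      rw [e3, ← hb, ← ENNReal.tsum_mul_left]
      refine tsum_congr fun k => ?_
      rw [Fin.prod_univ_castSucc]
      simp only [h1, h2, hB, Set.mem_setOf_eq, ← ha]
      rw [mul_ite, mul_zero, mul_comm (ENNReal.ofReal (p a j))]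
    simp only [e2]
    rw [← ENNReal.ofReal_tsum_of_nonneg, tsum_mul_left, hTc]
    · rfl
    · intro j
      have := hpnn a j
      have : 0 ≤ 1 - p a j := by linarith [hp1 a j]
      positivity
    · exact ffun_summable (hpnn a) (hp1 a) (hp a).summable r _
  simp only [hx]
  have hnn : ∀ x : Fin (n+1) → A,
      0 ≤ pw Q η n x * ffun (p (x (Fin.last n))) r (cnt n (x (Fin.last n)) x) := fun x =>
    mul_nonneg (pw_nonneg hQnn hηnn n x) (ffun_nonneg (hpnn _) (hp1 _) _ _)
  rw [← ENNReal.ofReal_sum_of_nonneg fun x _ => hnn x,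
    ENNReal.toReal_ofReal (Finset.sum_nonneg fun x _ => hnn x)]

/-- Theorem 5.1, case α ∈ (0,1): for the regime switching model driven by
an aperiodic irreducible Markov chain on a finite set `A` with stationary distribution `π`
and initial distribution `η`, if `P ∈ RV_α(C, ℓ)` with `α ∈ (0,1)` and `ℓ` locally bounded
away from `0` and `∞` on `[1,∞)`, then for all `r ≥ 0`,
`P_η{𝓛_n = r}/(n^{−(1−α)}ℓ(n)) → Σ_a π_a^α C(a) αΓ(r+1−α)/r!`. (Indexed from 0.) -/
theorem regime_switching_asymptotics {A : Type*} [Fintype A] [Nonempty A] [DecidableEq A]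
    {Ω : Type*} [MeasurableSpace Ω] (P : Measure Ω) [IsProbabilityMeasure P]
    (Z : ℕ → Ω → A × ℕ)
    (Q : A → A → ℝ) (π η : A → ℝ)
    (hQnn : ∀ x y, 0 ≤ Q x y) (hQ : ∀ x, ∑ y, Q x y = 1)
    (hprim : ∃ t : ℕ, ∀ a b, 0 < mpow Q t a b)
    (hπpos : ∀ x, 0 < π x) (hπsum : ∑ x, π x = 1)
    (hstat : ∀ x, ∑ y, π y * Q y x = π x)
    (hηnn : ∀ a, 0 ≤ η a) (hηsum : ∑ a, η a = 1)
    (p : A → ℕ → ℝ) (hpnn : ∀ a k, 0 ≤ p a k) (hp : ∀ a, HasSum (p a) 1)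
    (hZ : ∀ (n : ℕ) (a : ℕ → A) (k : ℕ → ℕ),
      P (⋂ i ∈ Finset.range (n + 1), {ω | Z i ω = (a i, k i)}) =
        ENNReal.ofReal ((η (a 0) * ∏ i ∈ Finset.range n, Q (a i) (a (i + 1))) *
          ∏ i ∈ Finset.range (n + 1), p (a i) (k i)))
    (α : ℝ) (hα : α ∈ Set.Ioo (0 : ℝ) 1)
    (ℓ : ℝ → ℝ) (hsv : SlowlyVarying ℓ)
    (hbdd : ∀ b : ℝ, 1 ≤ b → ∃ m M : ℝ, 0 < m ∧
      ∀ x ∈ Set.Icc (1 : ℝ) b, m ≤ ℓ x ∧ ℓ x ≤ M)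
    (C : A → ℝ) (hCnn : ∀ a, 0 ≤ C a) (hCne : ∃ a, C a ≠ 0)
    (hRV : ∀ a : A, Tendsto (fun ε : ℝ => nuR p a ε / (ε ^ (-α) * ℓ (1 / ε)))
      (nhdsWithin 0 (Set.Ioi 0)) (nhds (C a)))
    (r : ℕ) :
    Tendsto (fun n : ℕ =>
        (P {ω | (∑ i ∈ Finset.range n, if Z i ω = Z n ω then 1 else 0 : ℕ) = r}).toReal /
          ((n : ℝ) ^ (-(1 - α)) * ℓ n))
      atTop (nhds (∑ a, π a ^ α * (C a *
        (α * Real.Gamma (r + 1 - α) / (r.factorial : ℝ))))) := by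
  obtain ⟨hα0, hα1⟩ := hα
  have hpos : ∀ x, 1 ≤ x → 0 < ℓ x := fun x hx => by
    obtain ⟨m, M, hm, h⟩ := hbdd x hx
    exact hm.trans_le (h x ⟨hx, le_rfl⟩).1
  have hp1 : ∀ a k, p a k ≤ 1 := fun a k => le_hasSum (hp a) k fun j _ => hpnn a j
  obtain ⟨a₀, ha₀⟩ := hCne
  have hW := (W_atTop (hp a₀).summable (hpnn a₀) hα0 ((hCnn a₀).lt_of_ne' ha₀) hsv hpos
    (hRV a₀)).comp tendsto_natCast_atTop_atTop (α := ℕ)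
  have hlim : ∀ a, Tendsto (fun n => ∑ x, pw Q η n x * (if x (Fin.last n) = a then
      ffun (p a) r (cnt n a x) / ((n : ℝ) ^ (-(1 - α)) * ℓ n) else 0)) atTop
      (nhds (π a ^ α * (C a * (α * Real.Gamma (r + 1 - α) / (r.factorial : ℝ))))) := by
    intro a
    have h := chain_limit hQnn hQ hprim hπpos hπsum hstat hηnn hηsum a
      (fun n m => ffun (p a) r m / ((n : ℝ) ^ (-(1 - α)) * ℓ n))
      (fun n => (n : ℝ) ^ (-(1 - α)) * ℓ n) _ ?_ ?_
      (iid_asymp (hp a).summable (hpnn a) (hp1 a) hα0 hα1 hsv hpos (hRV a) r (hπpos a))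
    · have e : π a ^ α = π a * π a ^ (α - 1) := by
        rw [Real.rpow_sub (hπpos a), Real.rpow_one]
        have := hπpos a
        field_simp
      rw [e, mul_assoc]
      exact h
    · refine hW.congr' ?_
      filter_upwards [eventually_ge_atTop 1] with n hn
      have hn0 : (0:ℝ) < n := by exact_mod_cast hn
      simp only [Function.comp]
      rw [neg_sub, Real.rpow_sub hn0, Real.rpow_one]
      field_simp
    · filter_upwards [eventually_ge_atTop 1] with n hn m
      have hn1 : (1:ℝ) ≤ n := by exact_mod_cast hn
      have hn0 : (0:ℝ) < n := by linarith
      have := hpos n hn1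
      have hs : 0 < (n : ℝ) ^ (-(1 - α)) * ℓ n := by positivity
      rw [abs_of_nonneg (div_nonneg (ffun_nonneg (hpnn a) (hp1 a) _ _) hs.le)]
      gcongr
      exact ffun_le (hpnn a) (hp1 a) (hp a) _ _
  refine (tendsto_finsetSum _ fun a _ => hlim a).congr fun n => ?_
  rw [prob_formula P Z Q η hQnn hQ hηnn hηsum p hpnn hp hp1 hZ r n, Finset.sum_comm,
    Finset.sum_div]
  refine Finset.sum_congr rfl fun x _ => ?_
  rw [← Finset.mul_sum, Finset.sum_ite_eq]
  simp [mul_div_assoc]
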